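/- (Directional Open Mapping) Let n, m be positive integers, x̂ ∈ ℝᵐ, let C ⊆ ℝᵐ be a closed convex cone, and δ > 0. Let F : x̂ + (C ∩ B_m(δ)) → ℝⁿ be a continuous function that is differentiable at x̂ in the direction of C with differential L : ℝᵐ → ℝⁿ, and assume there exists v ∈ ℝⁿ with v ∈ int(L(C)). Then there exist a convex cone Γ ⊆ ℝⁿ and r̄ > 0 such that v ∈ int Γ and F(x̂ + (C ∩ B_m(δ))) ⊇ F(x̂) + (Γ ∩ B_n(r̄)). -/

import Mathlib

open Set Metric Filter Asymptotics Topology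

/-- A convex cone in a real vector space: contains `0`, is convex, and is
invariant under multiplication by nonnegative scalars. -/
def IsConvexCone {E : Type*} [AddCommMonoid E] [Module ℝ E] (C : Set E) : Prop :=
  (0 : E) ∈ C ∧ Convex ℝ C ∧ ∀ r : ℝ, 0 ≤ r → ∀ c ∈ C, r • c ∈ C

/-!
Choose a simplex around `v` inside `L(C)` and lift its vertices to `C`: barycentric coordinates
give a continuous right inverse `σ` of `L` that maps a ball around `v` into `C`. For small `l > 0`
the rescaled map `u ↦ l⁻¹ (F(x̂ + l σ(u)) - F(x̂))` is uniformly close to the identity on that ball,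
so by Brouwer's theorem its image contains a smaller ball `B`. Hence `F(x̂) + l B` lies in the image
of `F` for all small `l`, and these sets `l B` sweep out a truncated cone.

Brouwer's theorem is proved by the Milnor–Rogers argument: if `h` is Lipschitz and vanishes off `s`,
then `id + t h` is a bijection of `s` for small `t`, so the polynomial `t ↦ ∫ₛ det(1 + t Dh)` is
equal to the volume of `s` near `0`, hence also at `t = 1`. For a retraction `id + h` of a ball onto
its boundary sphere the integrand vanishes at `t = 1`.
-/

section DeterminantIntegral

open MeasureTheory Module Polynomial

theorem exists_polynomial_eval_eq_integral {α : Type*} [MeasurableSpace α] {μ : Measure α}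
    {P : α → ℝ[X]} {n : ℕ} (hdeg : ∀ x, (P x).natDegree ≤ n)
    (hint : ∀ t, Integrable (fun x => (P x).eval t) μ) :
    ∃ Q : ℝ[X], ∀ t, Q.eval t = ∫ x, (P x).eval t ∂μ := by
  let nodes : Finset ℕ := Finset.range (n + 1)
  let interp : (ℕ → ℝ) →ₗ[ℝ] ℝ[X] := Lagrange.interpolate nodes (fun i => (i : ℝ))
  have hP (x : α) : P x = interp fun i => (P x).eval (i : ℝ) := by
    refine Lagrange.eq_interpolate Nat.cast_injective.injOn ?_
    rw [Finset.card_range]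
    exact degree_le_natDegree.trans_lt (by exact_mod_cast Nat.lt_succ_of_le (hdeg x))
  have heval (r : ℕ → ℝ) (t : ℝ) : (interp r).eval t =
      ∑ i ∈ nodes, r i * (Lagrange.basis nodes (fun i => (i : ℝ)) i).eval t := by
    simp only [interp, Lagrange.interpolate_apply, eval_finsetSum, eval_mul, eval_C]
  refine ⟨interp fun i => ∫ x, (P x).eval (i : ℝ) ∂μ, fun t => ?_⟩
  calc (interp fun i => ∫ x, (P x).eval (i : ℝ) ∂μ).eval t
      = ∫ x, (interp fun i => (P x).eval (i : ℝ)).eval t ∂μ := by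
        simp only [heval]
        rw [integral_finsetSum nodes fun i _ => (hint i).mul_const _]
        simp only [integral_mul_const]
    _ = ∫ x, (P x).eval t ∂μ := by simp only [← hP]

theorem exists_polynomial_eval_eq_det_one_add_smul {R M : Type*} [CommRing R] [Nontrivial R]
    [AddCommGroup M] [Module R M] [Module.Free R M] [Module.Finite R M] (A : M →ₗ[R] M) :
    ∃ P : R[X], P.natDegree ≤ finrank R M ∧ ∀ t : R, P.eval t = LinearMap.det (1 + t • A) := by
  classical
  let b := Module.Free.chooseBasis R M
  let N := LinearMap.toMatrix b b A
  refine ⟨Matrix.det ((X : R[X]) • N.map C + (1 : Matrix _ _ R).map C), ?_, fun t => ?_⟩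
  · rw [finrank_eq_card_chooseBasisIndex]
    exact natDegree_det_X_add_C_le N 1
  · have hmat : LinearMap.toMatrix b b (1 + t • A) = 1 + t • N := by
      rw [map_add, map_smul, LinearMap.toMatrix_one]
    rw [← LinearMap.det_toMatrix b, hmat, ← coe_evalRingHom, RingHom.map_det]
    congr 1
    ext i j
    simp [Matrix.one_apply, apply_ite, mul_comm t, add_comm]

theorem bijective_id_add_of_lipschitzWith {V : Type*} [NormedAddCommGroup V] [CompleteSpace V]
    {h : V → V} {K : NNReal} (hK : K < 1) (hh : LipschitzWith K h) :
    Function.Bijective fun x => x + h x := by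
  rw [Function.bijective_iff_existsUnique]
  intro y
  have hcontr : ContractingWith K fun x => y - h x := ⟨hK, by
    simpa using (LipschitzWith.const y).sub hh⟩
  refine ⟨hcontr.fixedPoint, ?_, fun x hx => hcontr.fixedPoint_unique ?_⟩
  · exact (sub_eq_iff_eq_add.1 hcontr.fixedPoint_isFixedPt).symm
  · exact sub_eq_iff_eq_add.2 hx.symm

theorem eventually_forall_smul_mem_of_isBounded {E : Type*} [SeminormedAddCommGroup E]
    [NormedSpace ℝ E] {K U : Set E} (hK : Bornology.IsBounded K) (hU : U ∈ 𝓝 0) :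
    ∀ᶠ t : ℝ in 𝓝 0, ∀ x ∈ K, t • x ∈ U :=
  tendsto_smallSets_iff.1 ((NormedSpace.isVonNBounded_iff ℝ).2 hK).tendsto_smallSets_nhds U hU
    |>.mono fun _ ht _ hx => ht (smul_mem_smul_set hx)

variable {V : Type*} [NormedAddCommGroup V] [NormedSpace ℝ V]

theorem eventually_det_one_add_pos : ∀ᶠ A : V →L[ℝ] V in 𝓝 0, 0 < (1 + A).det := by
  have hcont : Continuous fun A : V →L[ℝ] V => (1 + A).det :=
    ContinuousLinearMap.continuous_det.comp (continuous_const.add continuous_id)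
  exact hcont.continuousAt.eventually_const_lt (by simp [ContinuousLinearMap.det])

variable [FiniteDimensional ℝ V] [MeasurableSpace V] [BorelSpace V]

theorem integrableOn_comp_fderiv_of_lipschitzWith {W : Type*} [NormedAddCommGroup W]
    [NormedSpace ℝ W] [FiniteDimensional ℝ W] {μ : Measure V} {s : Set V} (hs : μ s ≠ ⊤)
    {h : V → W} {K : NNReal} (hh : LipschitzWith K h) {g : (V →L[ℝ] W) → ℝ} (hg : Continuous g) :
    IntegrableOn (fun x => g (fderiv ℝ h x)) s μ := by
  obtain ⟨B, hB⟩ := (isCompact_closedBall (0 : V →L[ℝ] W) K).exists_bound_of_continuousOn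
    hg.continuousOn
  refine IntegrableOn.of_bound hs.lt_top
    (hg.measurable.comp (measurable_fderiv ℝ h)).aestronglyMeasurable B
    (Eventually.of_forall fun x => hB _ ?_)
  simpa using norm_fderiv_le_of_lipschitz ℝ hh (x₀ := x)

variable {μ : Measure V} [μ.IsAddHaarMeasure] {s : Set V} {h : V → V} {K : NNReal}

theorem eventually_setIntegral_det_one_add_smul_fderiv (hs : MeasurableSet s)
    (hh : LipschitzWith K h) (hsupp : ∀ x ∉ s, h x = 0)
    (hdiff : ∀ x ∈ s, DifferentiableAt ℝ h x) :
    ∀ᶠ t : ℝ in 𝓝 0, ∫ x in s, (1 + t • fderiv ℝ h x).det ∂μ = μ.real s := by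
  have hbounded : Bornology.IsBounded (range (fderiv ℝ h)) :=
    isBounded_iff_forall_norm_le.2
      ⟨K, forall_mem_range.2 fun x => norm_fderiv_le_of_lipschitz ℝ hh⟩
  have hpos : ∀ᶠ t : ℝ in 𝓝 0, ∀ A ∈ range (fderiv ℝ h), 0 < (1 + t • A).det :=
    eventually_forall_smul_mem_of_isBounded hbounded eventually_det_one_add_pos
  have hsmall : ∀ᶠ t : ℝ in 𝓝 0, ‖t‖₊ * K < 1 :=
    (by fun_prop : Continuous fun t : ℝ => ‖t‖₊ * K).continuousAt.eventually_lt_const (by simp)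
  filter_upwards [hpos, hsmall] with t hpos hsmall
  let g : V → V := fun x => x + t • h x
  have hg : Function.Bijective g :=
    bijective_id_add_of_lipschitzWith hsmall ((lipschitzWith_smul t).comp hh)
  have himage : g '' s = s := by
    have hfix : EqOn g id sᶜ := fun x hx => by simp [g, hsupp x hx]
    rw [← compl_inj_iff, ← image_compl_eq hg, hfix.image_eq, image_id]
  have hderiv (x : V) (hx : x ∈ s) : HasFDerivWithinAt g (1 + t • fderiv ℝ h x) s x :=
    ((hasFDerivAt_id x).add ((hdiff x hx).hasFDerivAt.const_smul t)).hasFDerivWithinAt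
  calc ∫ x in s, (1 + t • fderiv ℝ h x).det ∂μ
      = ∫ x in s, |(1 + t • fderiv ℝ h x).det| • (1 : ℝ) ∂μ := by
        simp only [abs_of_pos (hpos _ (mem_range_self _)), smul_eq_mul, mul_one]
    _ = ∫ _ in g '' s, (1 : ℝ) ∂μ :=
        (integral_image_eq_integral_abs_det_fderiv_smul μ hs hderiv hg.injective.injOn
          fun _ => 1).symm
    _ = μ.real s := by rw [himage, setIntegral_const, smul_eq_mul, mul_one]

theorem setIntegral_det_one_add_fderiv (hs : MeasurableSet s) (hμs : μ s ≠ ⊤)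
    (hh : LipschitzWith K h) (hsupp : ∀ x ∉ s, h x = 0)
    (hdiff : ∀ x ∈ s, DifferentiableAt ℝ h x) :
    ∫ x in s, (1 + fderiv ℝ h x).det ∂μ = μ.real s := by
  choose P hPdeg hPeval using fun x =>
    exists_polynomial_eval_eq_det_one_add_smul (fderiv ℝ h x : V →ₗ[ℝ] V)
  replace hPeval (t : ℝ) (x : V) : (P x).eval t = (1 + t • fderiv ℝ h x).det := hPeval x t
  obtain ⟨Q, hQ⟩ := exists_polynomial_eval_eq_integral (μ := μ.restrict s) hPdeg fun t => by
    simp only [hPeval]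
    exact integrableOn_comp_fderiv_of_lipschitzWith hμs hh (g := fun A => (1 + t • A).det)
      (ContinuousLinearMap.continuous_det.comp (by fun_prop))
  simp only [hPeval] at hQ
  have hQconst : Q = C (μ.real s) := by
    refine eq_of_infinite_eval_eq _ _ (infinite_of_mem_nhds (0 : ℝ) ?_)
    filter_upwards [eventually_setIntegral_det_one_add_smul_fderiv (μ := μ) hs hh hsupp hdiff]
      with t ht
    simpa [hQ] using ht
  simpa [hQconst] using (hQ 1).symm

end DeterminantIntegral

section FixedPoint

open Function MeasureTheory

theorem lipschitzWith_of_lipschitzOnWith_of_eq_zero {E F : Type*} [SeminormedAddCommGroup E]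
    [NormedSpace ℝ E] [SeminormedAddCommGroup F] {K : NNReal} {s : Set E} {f : E → F}
    (hs : IsClosed s) (hf : LipschitzOnWith K f s) (hzero : ∀ x ∉ interior s, f x = 0) :
    LipschitzWith K f := by
  have hmixed {x y : E} (hx : x ∈ interior s) (hy : y ∉ s) :
      dist (f x) (f y) ≤ K * dist x y := by
    obtain ⟨z, hzxy, hzs, hz⟩ : ∃ z ∈ segment ℝ x y, z ∈ s ∧ z ∉ interior s := by
      by_contra! hsep
      obtain ⟨z, -, hzint, hzs⟩ := (convex_segment x y).isPreconnected _ _ isOpen_interior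
        hs.isOpen_compl (fun z hz => (em (z ∈ s)).imp (hsep z hz) id)
        ⟨x, left_mem_segment ℝ x y, hx⟩ ⟨y, right_mem_segment ℝ x y, hy⟩
      exact hzs (interior_subset hzint)
    calc dist (f x) (f y) = dist (f x) (f z) := by
          rw [hzero y fun h => hy (interior_subset h), hzero z hz]
      _ ≤ K * dist x z := hf.dist_le_mul x (interior_subset hx) z hzs
      _ ≤ K * dist x y := by
          gcongr
          exact (dist_add_dist_of_mem_segment hzxy).le.trans' (le_add_of_nonneg_right dist_nonneg)
  refine LipschitzWith.of_dist_le_mul fun x y => ?_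
  by_cases hx : x ∈ interior s <;> by_cases hy : y ∈ interior s
  · exact hf.dist_le_mul x (interior_subset hx) y (interior_subset hy)
  · by_cases hys : y ∈ s
    · exact hf.dist_le_mul x (interior_subset hx) y hys
    · exact hmixed hx hys
  · by_cases hxs : x ∈ s
    · exact hf.dist_le_mul x hxs y (interior_subset hy)
    · rw [dist_comm, dist_comm x]
      exact hmixed hy hxs
  · rw [hzero x hx, hzero y hy, dist_self]
    positivity

section InnerProductSpace

variable {V : Type*} [NormedAddCommGroup V] [InnerProductSpace ℝ V] [FiniteDimensional ℝ V]

theorem det_fderiv_eq_zero_of_eventually_norm_eq {r : V → V} {x : V} {R : ℝ} (hR : R ≠ 0)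
    (hr : DifferentiableAt ℝ r x) (hnorm : ∀ᶠ y in 𝓝 x, ‖r y‖ = R) : (fderiv ℝ r x).det = 0 := by
  by_contra hdet
  obtain ⟨w, hw⟩ : ∃ w, fderiv ℝ r x w = r x :=
    (LinearMap.equivOfDetNeZero (fderiv ℝ r x).toLinearMap hdet).surjective (r x)
  have hconst : HasFDerivAt (fun y => ‖r y‖ ^ 2) (0 : V →L[ℝ] ℝ) x :=
    (hasFDerivAt_const (R ^ 2) x).congr_of_eventuallyEq <| hnorm.mono fun y hy => by simp only [hy]
  have hderiv := DFunLike.congr_fun (hr.hasFDerivAt.norm_sq.unique hconst) w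
  simp [hw, hnorm.self_of_nhds, hR] at hderiv

theorem exists_mem_sphere_apply_ne_of_contDiff {r : V → V} {R : ℝ} (hR : 0 < R)
    (hr : ContDiff ℝ 1 r) (hnorm : ∀ x, ‖r x‖ = R) : ∃ x ∈ sphere 0 R, r x ≠ x := by
  by_contra! hfix
  borelize V
  let h : V → V := (ball 0 R).indicator fun x => r x - x
  have hzero (x : V) (hx : x ∉ ball 0 R) : h x = 0 := indicator_of_notMem hx _
  have heq : EqOn h (fun x => r x - x) (closedBall 0 R) := fun x hx => by
    by_cases hxR : x ∈ ball 0 R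
    · exact indicator_of_mem hxR _
    · have hxsphere : x ∈ sphere 0 R := le_antisymm hx (not_lt.1 hxR)
      simp only [hzero x hxR, hfix x hxsphere, sub_self]
  obtain ⟨K, hK⟩ := (hr.sub contDiff_id).contDiffOn.exists_lipschitzOnWith one_ne_zero
    (convex_closedBall (0 : V) R) (isCompact_closedBall 0 R)
  have hlipOn : LipschitzOnWith K h (closedBall 0 R) := fun x hx y hy => by
    rw [heq hx, heq hy]
    exact hK hx hy
  have hlip : LipschitzWith K h := lipschitzWith_of_lipschitzOnWith_of_eq_zero isClosed_closedBall
    hlipOn fun x hx => hzero x fun hxR => hx (ball_subset_interior_closedBall hxR)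
  have hdiff (x : V) : DifferentiableAt ℝ r x := hr.differentiable one_ne_zero x
  have hderiv (x : V) (hx : x ∈ ball 0 R) :
      HasFDerivAt h (fderiv ℝ r x - ContinuousLinearMap.id ℝ V) x :=
    ((hdiff x).hasFDerivAt.sub (hasFDerivAt_id x)).congr_of_eventuallyEq <|
      heq.eventuallyEq_of_mem (closedBall_mem_nhds_of_mem hx)
  have hdet (x : V) (hx : x ∈ ball 0 R) : (1 + fderiv ℝ h x).det = 0 := by
    rw [(hderiv x hx).fderiv, ← ContinuousLinearMap.one_def, add_sub_cancel]
    exact det_fderiv_eq_zero_of_eventually_norm_eq hR.ne' (hdiff x) (.of_forall hnorm)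
  have hvolume : (Measure.addHaar : Measure V).real (ball 0 R) = 0 := by
    rw [← setIntegral_det_one_add_fderiv measurableSet_ball measure_ball_lt_top.ne hlip hzero
      fun x hx => (hderiv x hx).differentiableAt]
    exact setIntegral_eq_zero_of_forall_eq_zero hdet
  exact (ENNReal.toReal_pos (measure_ball_pos _ _ hR).ne' measure_ball_lt_top.ne).ne' hvolume

theorem exists_isFixedPt_of_contDiff_of_hasCompactSupport {φ : V → V} (hφ : ContDiff ℝ 1 φ)
    (hsupp : HasCompactSupport φ) : ∃ x, IsFixedPt φ x := by
  by_contra! hfix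
  obtain ⟨R, hR, hzero⟩ := hsupp.exists_pos_le_norm
  have hne (x : V) : x - φ x ≠ 0 := sub_ne_zero.2 (Ne.symm (hfix x))
  have hsmooth : ContDiff ℝ 1 fun x => x - φ x := contDiff_id.sub hφ
  let r : V → V := fun x => (R / ‖x - φ x‖) • (x - φ x)
  have hr : ContDiff ℝ 1 r :=
    (contDiff_const.div (hsmooth.norm ℝ hne) fun x => norm_ne_zero_iff.2 (hne x)).smul hsmooth
  have hnorm (x : V) : ‖r x‖ = R := by
    rw [norm_smul, norm_div, norm_norm, div_mul_cancel₀ _ (norm_ne_zero_iff.2 (hne x)),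
      Real.norm_of_nonneg hR.le]
  obtain ⟨x, hx, hrx⟩ := exists_mem_sphere_apply_ne_of_contDiff hR hr hnorm
  rw [mem_sphere_zero_iff_norm] at hx
  exact hrx (by simp [r, hzero x hx.ge, hx, hR.ne'])

theorem exists_isFixedPt_of_hasCompactSupport {φ : V → V} (hφ : Continuous φ)
    (hsupp : HasCompactSupport φ) : ∃ x, IsFixedPt φ x := by
  by_contra! hfix
  obtain ⟨ψ, hψ, hdist, hψsupp⟩ := hφ.exists_contDiff_approx 1 (ε := fun x => dist (φ x) x)
    (hφ.dist continuous_id) fun x => dist_pos.2 (hfix x)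
  obtain ⟨x, hx⟩ := exists_isFixedPt_of_contDiff_of_hasCompactSupport hψ (hsupp.mono hψsupp)
  have hlt := hdist x
  rw [hx, dist_comm] at hlt
  exact lt_irrefl _ hlt

end InnerProductSpace

variable {V : Type*} [NormedAddCommGroup V] [NormedSpace ℝ V] [FiniteDimensional ℝ V]

theorem exists_isFixedPt_of_isBounded_range {f : V → V} (hf : Continuous f)
    (hbounded : Bornology.IsBounded (range f)) : ∃ x, IsFixedPt f x := by
  obtain ⟨M, hM⟩ := hbounded.subset_closedBall 0
  obtain ⟨χ, hχone, -, hχsupp, hχ⟩ := exists_continuous_one_zero_of_isCompact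
    (isCompact_closedBall (0 : V) M) isClosed_empty (disjoint_empty _)
  let e := toEuclidean (E := V)
  let φ : V → V := fun x => χ x • f x
  have hφ : Continuous φ := χ.continuous.smul hf
  have hφsupp : HasCompactSupport φ := hχsupp.smul_right
  obtain ⟨y, hy⟩ := exists_isFixedPt_of_hasCompactSupport (φ := e ∘ φ ∘ e.symm) (by fun_prop)
    ((hφsupp.comp_homeomorph e.symm.toHomeomorph).comp_left (map_zero e))
  obtain ⟨x, hx⟩ : ∃ x, IsFixedPt φ x := ⟨e.symm y, e.eq_symm_apply.2 hy⟩
  have hxM : x ∈ closedBall 0 M := by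
    have hfx : ‖f x‖ ≤ M := by simpa using hM (mem_range_self x)
    rw [mem_closedBall_zero_iff, ← hx, norm_smul, Real.norm_of_nonneg (hχ x).1]
    exact (mul_le_of_le_one_left (norm_nonneg _) (hχ x).2).trans hfx
  have hχx : χ x = 1 := hχone hxM
  exact ⟨x, by simpa [φ, IsFixedPt, hχx] using hx⟩

theorem exists_mem_closedBall_isFixedPt {c : V} {ρ : ℝ} (hρ : 0 < ρ) {f : V → V}
    (hf : ContinuousOn f (closedBall c ρ)) (hmaps : MapsTo f (closedBall c ρ) (closedBall c ρ)) :
    ∃ x ∈ closedBall c ρ, IsFixedPt f x := by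
  have := Metric.instTietzeExtensionClosedBall ℝ c hρ
  obtain ⟨g, hg, hgf⟩ := ContinuousMap.exists_forall_mem_restrict_eq isClosed_closedBall
    ⟨(closedBall c ρ).domRestrict f, hf.domRestrict⟩ (t := closedBall c ρ) fun x => hmaps x.2
  obtain ⟨x, hx⟩ := exists_isFixedPt_of_isBounded_range g.continuous
    (isBounded_closedBall.subset (range_subset_iff.2 hg))
  have hxball : x ∈ closedBall c ρ := hx ▸ hg x
  have hgx : g x = f x := DFunLike.congr_fun hgf ⟨x, hxball⟩
  exact ⟨x, hxball, hgx.symm.trans hx⟩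

end FixedPoint

section OpenMapping

theorem closedBall_subset_image_of_dist_le {V : Type*} [NormedAddCommGroup V] [NormedSpace ℝ V]
    [FiniteDimensional ℝ V] {v : V} {ρ ε : ℝ} (hρ : 0 < ρ) {f : V → V}
    (hf : ContinuousOn f (closedBall v ρ)) (hclose : ∀ u ∈ closedBall v ρ, dist (f u) u ≤ ε) :
    closedBall v (ρ - ε) ⊆ f '' closedBall v ρ := by
  intro w hw
  obtain ⟨u, hu, hfix⟩ := exists_mem_closedBall_isFixedPt hρ (f := fun u => w + (u - f u))
    (continuousOn_const.add (continuousOn_id.sub hf)) fun u hu => by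
      calc dist (w + (u - f u)) v ≤ dist (w + (u - f u)) w + dist w v := dist_triangle _ _ _
        _ ≤ ε + (ρ - ε) := by
          gcongr
          · simpa [dist_eq_norm, norm_sub_rev] using hclose u hu
          · exact hw
        _ = ρ := by ring
  refine ⟨u, hu, ?_⟩
  have huw : w + (u - f u) = u := hfix
  rw [add_sub_left_comm, add_eq_left, sub_eq_zero] at huw
  exact huw.symm

theorem exists_continuous_rightInverse_eventually_mem {E G : Type*} [AddCommGroup E] [Module ℝ E]
    [TopologicalSpace E] [ContinuousAdd E] [ContinuousSMul ℝ E] [NormedAddCommGroup G]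
    [NormedSpace ℝ G] [FiniteDimensional ℝ G] (L : E →ₗ[ℝ] G) {C : Set E} (hC : Convex ℝ C)
    {v : G} (hv : v ∈ interior (L '' C)) :
    ∃ σ : G → E, Continuous σ ∧ Function.RightInverse σ L ∧ ∀ᶠ w in 𝓝 v, σ w ∈ C := by
  obtain ⟨b, hvb, hbC⟩ := exists_mem_interior_convexHull_affineBasis
    (mem_interior_iff_mem_nhds.1 hv)
  choose a haC haL using fun i => hbC (subset_convexHull ℝ _ (mem_range_self i))
  let σ : G → E := fun w => ∑ i, b.coord i w • a i
  refine ⟨σ, ?_, fun w => ?_, ?_⟩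
  · exact continuous_finsetSum _ fun i _ =>
      (continuous_barycentric_coord b i).smul continuous_const
  · simp only [σ, map_sum, map_smul, haL, b.linear_combination_coord_eq_self]
  · filter_upwards [mem_interior_iff_mem_nhds.1 hvb] with w hw
    rw [b.convexHull_eq_nonneg_coord] at hw
    exact hC.sum_mem (fun i _ => hw i) (b.sum_coord_apply_eq_one w) fun i _ => haC i

section Cone

open Pointwise

theorem isConvexCone_Ici_smul {G : Type*} [AddCommGroup G] [Module ℝ G] {s : Set G}
    (hs : Convex ℝ s) (hne : s.Nonempty) : IsConvexCone (Ici (0 : ℝ) • s) := by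
  refine ⟨?_, ?_, ?_⟩
  · obtain ⟨x, hx⟩ := hne
    exact mem_smul.2 ⟨0, self_mem_Ici, x, hx, zero_smul ℝ x⟩
  · rintro _ ⟨p, hp, x, hx, rfl⟩ _ ⟨q, hq, y, hy, rfl⟩ α β hα hβ -
    have hmem : (α * p) • x + (β * q) • y ∈ (α * p + β * q) • s := by
      rw [hs.add_smul (mul_nonneg hα hp) (mul_nonneg hβ hq)]
      exact add_mem_add (smul_mem_smul_set hx) (smul_mem_smul_set hy)
    obtain ⟨z, hz, hsum⟩ := hmem
    refine mem_smul.2 ⟨_, add_nonneg (mul_nonneg hα hp) (mul_nonneg hβ hq), z, hz, ?_⟩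
    simpa only [smul_smul] using hsum
  · rintro r hr _ ⟨p, hp, x, hx, rfl⟩
    exact mem_smul.2 ⟨r * p, mul_nonneg hr hp, x, hx, mul_smul r p x⟩

theorem Ici_smul_inter_closedBall_subset {G : Type*} [SeminormedAddCommGroup G] [NormedSpace ℝ G]
    {s : Set G} {a : ℝ} (ha : 0 < a) (hs : ∀ w ∈ s, a ≤ ‖w‖) (b : ℝ) :
    Ici (0 : ℝ) • s ∩ closedBall 0 (b * a) ⊆ insert 0 (Ioc (0 : ℝ) b • s) := by
  rintro _ ⟨⟨l, hl, w, hw, rfl⟩, hlw⟩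
  obtain rfl | hlpos := (mem_Ici.1 hl).eq_or_lt
  · exact mem_insert_iff.2 (Or.inl (zero_smul ℝ w))
  · rw [mem_closedBall_zero_iff, norm_smul_of_nonneg hlpos.le] at hlw
    have hla : l * a ≤ b * a := (mul_le_mul_of_nonneg_left (hs w hw) hlpos.le).trans hlw
    exact Or.inr (smul_mem_smul ⟨hlpos, le_of_mul_le_mul_right hla ha⟩ hw)

variable {G : Type*} [NormedAddCommGroup G] [NormedSpace ℝ G]

theorem exists_isConvexCone_inter_closedBall_subset {S : Set G} {v : G} {ε : ℝ} (hε : 0 < ε)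
    (hzero : 0 ∈ S) (hS : ∀ᶠ l : ℝ in 𝓝[>] 0, ∀ w ∈ closedBall v ε, l • w ∈ S) :
    ∃ Γ, IsConvexCone Γ ∧ v ∈ interior Γ ∧ ∃ r : ℝ, 0 < r ∧ Γ ∩ closedBall 0 r ⊆ S := by
  obtain ⟨b, hb, hbS⟩ := mem_nhdsGT_iff_exists_Ioc_subset.1 hS
  replace hb : 0 < b := hb
  obtain rfl | hv := eq_or_ne v 0
  · refine ⟨univ, ⟨mem_univ _, convex_univ, fun _ _ _ _ => mem_univ _⟩, by simp, b * ε,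
      by positivity, ?_⟩
    rintro z ⟨-, hz⟩
    have hz' : b⁻¹ • z ∈ closedBall 0 ε := by
      rw [mem_closedBall_zero_iff] at hz ⊢
      rwa [norm_smul_of_nonneg (inv_nonneg.2 hb.le), inv_mul_le_iff₀ hb]
    simpa only [smul_inv_smul₀ hb.ne'] using hbS (right_mem_Ioc.2 hb) _ hz'
  · have hvpos : 0 < ‖v‖ / 2 := half_pos (norm_pos_iff.2 hv)
    let κ := min ε (‖v‖ / 2)
    have hκ : 0 < κ := lt_min hε hvpos
    have hnorm (w : G) (hw : w ∈ closedBall v κ) : ‖v‖ / 2 ≤ ‖w‖ := by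
      have hvw : ‖v - w‖ ≤ ‖v‖ / 2 := (mem_closedBall_iff_norm'.1 hw).trans (min_le_right _ _)
      linarith [norm_sub_norm_le v w]
    refine ⟨Ici (0 : ℝ) • closedBall v κ,
      isConvexCone_Ici_smul (convex_closedBall v κ) (nonempty_closedBall.2 hκ.le), ?_,
      b * (‖v‖ / 2), by positivity, (Ici_smul_inter_closedBall_subset hvpos hnorm b).trans ?_⟩
    · refine mem_interior_iff_mem_nhds.2 (mem_of_superset (closedBall_mem_nhds v hκ) fun w hw => ?_)
      exact mem_smul.2 ⟨1, zero_le_one' ℝ, w, hw, one_smul ℝ w⟩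
    · rintro _ (rfl | ⟨l, hl, w, hw, rfl⟩)
      · exact hzero
      · exact hbS hl w (closedBall_subset_closedBall (min_le_left _ _) hw)

end Cone

section Rescaling

variable {E G : Type*} [SeminormedAddCommGroup E] [NormedSpace ℝ E] [NormedAddCommGroup G]
  [NormedSpace ℝ G] {xhat : E} {C K : Set E} {δ : ℝ} {F : E → G} {L : E →ₗ[ℝ] G}

theorem eventually_forall_smul_mem_inter_closedBall (hC : IsConvexCone C) (hδ : 0 < δ)
    (hKC : K ⊆ C) (hK : Bornology.IsBounded K) :
    ∀ᶠ l : ℝ in 𝓝[>] 0, ∀ c ∈ K, l • c ∈ C ∩ closedBall 0 δ := by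
  filter_upwards [self_mem_nhdsWithin, (eventually_forall_smul_mem_of_isBounded hK
    (closedBall_mem_nhds 0 hδ)).filter_mono nhdsWithin_le_nhds] with l hl hball c hc
  exact ⟨hC.2.2 l (le_of_lt hl) c (hKC hc), hball c hc⟩

theorem eventually_forall_norm_inv_smul_sub_le (hC : IsConvexCone C) (hδ : 0 < δ)
    (hdiff : (fun c => F (xhat + c) - F xhat - L c) =o[𝓝[C ∩ closedBall 0 δ] 0] fun c => c)
    (hKC : K ⊆ C) (hK : Bornology.IsBounded K) {ε : ℝ} (hε : 0 < ε) :
    ∀ᶠ l : ℝ in 𝓝[>] 0, ∀ c ∈ K, ‖l⁻¹ • (F (xhat + l • c) - F xhat) - L c‖ ≤ ε := by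
  obtain ⟨M, hM, hKM⟩ := hK.exists_pos_norm_le
  obtain ⟨U, hU, hUdiff⟩ := mem_nhdsWithin_iff_exists_mem_nhds_inter.1
    (hdiff.bound (div_pos hε hM))
  filter_upwards [self_mem_nhdsWithin, eventually_forall_smul_mem_inter_closedBall hC hδ hKC hK,
    (eventually_forall_smul_mem_of_isBounded hK hU).filter_mono nhdsWithin_le_nhds]
    with l hl hmem hlU c hc
  replace hl : 0 < l := hl
  calc ‖l⁻¹ • (F (xhat + l • c) - F xhat) - L c‖
      = l⁻¹ * ‖F (xhat + l • c) - F xhat - L (l • c)‖ := by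
        rw [← norm_smul_of_nonneg (inv_nonneg.2 hl.le), smul_sub l⁻¹ _ (L (l • c)), map_smul,
          inv_smul_smul₀ hl.ne']
    _ ≤ l⁻¹ * (ε / M * ‖l • c‖) := by
        gcongr
        exact hUdiff ⟨hlU c hc, hmem c hc⟩
    _ = ε / M * ‖c‖ := by
        rw [norm_smul, Real.norm_of_nonneg hl.le]
        field_simp
    _ ≤ ε / M * M := by
        gcongr
        exact hKM c hc
    _ = ε := div_mul_cancel₀ ε hM.ne'

variable [FiniteDimensional ℝ G]

theorem exists_eventually_add_smul_mem_image (hC : IsConvexCone C) (hδ : 0 < δ)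
    (hcont : ContinuousOn F ((fun c => xhat + c) '' (C ∩ closedBall 0 δ)))
    (hdiff : (fun c => F (xhat + c) - F xhat - L c) =o[𝓝[C ∩ closedBall 0 δ] 0] fun c => c)
    {v : G} (hv : v ∈ interior (L '' C)) :
    ∃ ε > 0, ∀ᶠ l : ℝ in 𝓝[>] 0, ∀ w ∈ closedBall v ε,
      F xhat + l • w ∈ F '' ((fun c => xhat + c) '' (C ∩ closedBall 0 δ)) := by
  obtain ⟨σ, hσ, hLσ, hσC⟩ := exists_continuous_rightInverse_eventually_mem L hC.2.1 hv
  obtain ⟨ρ, hρ, hρC⟩ := nhds_basis_closedBall.mem_iff.1 hσC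
  let K : Set E := σ '' closedBall v ρ
  have hKC : K ⊆ C := image_subset_iff.2 hρC
  have hK : Bornology.IsBounded K := ((isCompact_closedBall v ρ).image hσ).isBounded
  refine ⟨ρ / 2, half_pos hρ, ?_⟩
  filter_upwards [self_mem_nhdsWithin, eventually_forall_smul_mem_inter_closedBall hC hδ hKC hK,
    eventually_forall_norm_inv_smul_sub_le hC hδ hdiff hKC hK (half_pos hρ)] with l hl hmem hclose
  let f : G → G := fun u => l⁻¹ • (F (xhat + l • σ u) - F xhat)
  have hf : ContinuousOn f (closedBall v ρ) := by
    refine ((hcont.comp (by fun_prop) fun u hu => ?_).sub continuousOn_const).const_smul l⁻¹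
    exact mem_image_of_mem _ (hmem _ (mem_image_of_mem σ hu))
  have hfid (u : G) (hu : u ∈ closedBall v ρ) : dist (f u) u ≤ ρ / 2 := by
    simpa only [dist_eq_norm, hLσ u] using hclose _ (mem_image_of_mem σ hu)
  intro w hw
  obtain ⟨u, hu, rfl⟩ := closedBall_subset_image_of_dist_le hρ hf hfid (by rwa [sub_half])
  refine ⟨_, mem_image_of_mem _ (hmem _ (mem_image_of_mem σ hu)), ?_⟩
  rw [smul_inv_smul₀ (ne_of_gt hl), add_sub_cancel]

theorem directional_open_mapping_general (hC : IsConvexCone C) (hδ : 0 < δ)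
    (hcont : ContinuousOn F ((fun c => xhat + c) '' (C ∩ closedBall 0 δ)))
    (hdiff : (fun c => F (xhat + c) - F xhat - L c) =o[𝓝[C ∩ closedBall 0 δ] 0] fun c => c)
    {v : G} (hv : v ∈ interior (L '' C)) :
    ∃ Γ : Set G, IsConvexCone Γ ∧ v ∈ interior Γ ∧ ∃ r : ℝ, 0 < r ∧
      (fun z => F xhat + z) '' (Γ ∩ closedBall 0 r) ⊆
        F '' ((fun c => xhat + c) '' (C ∩ closedBall 0 δ)) := by
  obtain ⟨ε, hε, hmem⟩ := exists_eventually_add_smul_mem_image hC hδ hcont hdiff hv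
  simp only [image_subset_iff]
  refine exists_isConvexCone_inter_closedBall_subset hε ?_ hmem
  exact ⟨xhat, ⟨0, ⟨hC.1, mem_closedBall_self hδ.le⟩, add_zero xhat⟩, (add_zero _).symm⟩

end Rescaling

end OpenMapping

/-- Directional Open Mapping theorem: if `F` is continuous on `xhat + (C ∩ B_m(δ))`,
differentiable at `xhat` in the direction of the closed convex cone `C` with
differential `L`, and `v ∈ int (L C)`, then there are a convex cone `Γ ∋ v` in its
interior and `r > 0` with `F xhat + (Γ ∩ B_n(r)) ⊆ F (xhat + (C ∩ B_m(δ)))`. -/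
theorem directional_open_mapping {n m : ℕ} (hn : 0 < n) (hm : 0 < m)
    (xhat : EuclideanSpace ℝ (Fin m)) (C : Set (EuclideanSpace ℝ (Fin m)))
    (hC : IsConvexCone C) (hCclosed : IsClosed C) (δ : ℝ) (hδ : 0 < δ)
    (F : EuclideanSpace ℝ (Fin m) → EuclideanSpace ℝ (Fin n))
    (L : EuclideanSpace ℝ (Fin m) →L[ℝ] EuclideanSpace ℝ (Fin n))
    (hcont : ContinuousOn F ((fun c => xhat + c) '' (C ∩ closedBall 0 δ)))
    (hdiff : (fun c => F (xhat + c) - F xhat - L c)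
      =o[𝓝[C ∩ closedBall 0 δ] 0] (fun c => c))
    (v : EuclideanSpace ℝ (Fin n)) (hv : v ∈ interior (⇑L '' C)) :
    ∃ Γ : Set (EuclideanSpace ℝ (Fin n)), IsConvexCone Γ ∧ v ∈ interior Γ ∧
      ∃ r : ℝ, 0 < r ∧
        (fun z => F xhat + z) '' (Γ ∩ closedBall 0 r) ⊆
          F '' ((fun c => xhat + c) '' (C ∩ closedBall 0 δ)) :=
  directional_open_mapping_general (L := L) hC hδ hcont hdiff hv
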